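/- Let F be a field, let n ≥ 1, and let A and A' be central simple F-algebras of degree n (i.e., dim_F A = dim_F A' = n²) that are isomorphic as F-algebras. Let E ⊆ A and E' ⊆ A' be commutative separable (étale) F-subalgebras with dim_F E = dim_F E' = n, and let φ: E → E' be an isomorphism of F-algebras. Then there exists an F-algebra isomorphism ψ: A → A' whose restriction to E is φ. -/

import Mathlib

/-!
After identifying `A'` with `A`, the claim is that two embeddings `h, h' : E → A` differ by an inner
automorphism of `A`. Since `E` is reduced and finite-dimensional, it is a finite product of fields
`K i`. Through `h`, the algebra `A` becomes a left `A`-module on which `E` acts by right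
multiplication, and it splits as the direct sum of the left ideals `A eᵢ`, where `eᵢ` is the image
of the `i`-th primitive idempotent. Each `A eᵢ` is a module over `K i ⊗ A`, which is a simple ring
because `A` is central simple (`isSimpleRing_tensor`, by the Jacobson density theorem).

* A nonzero module `M` over the simple ring `K ⊗ A` is faithful, so `K ⊗ A` embeds in `End_K M`
  and `n ^ 2 ≤ (dim_K M) ^ 2` (`le_finrank_of_nontrivial`). Applied to all `A eᵢ`, and
  since `∑ dim_F (A eᵢ) = n ^ 2 = n * ∑ dim_F (K i)`, this forces `dim_{K i} (A eᵢ) = n`, which does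
  not depend on the embedding (`finrank_piece`).
* Modules over a simple Artinian algebra are classified by their dimension
  (`exists_equiv_of_finrank_eq`), so `A eᵢ ≃ A eᵢ'` compatibly with `A` and `K i`.

Gluing these gives a left `A`-linear automorphism of `A` intertwining the two right actions of `E`.
It is right multiplication by a unit, and that unit conjugates `h` into `h'`
(`exists_conj`).
-/

open scoped TensorProduct

namespace EtaleExtension

/-! ### Simplicity of `K ⊗ A` -/

section Simple

variable {F A : Type} [Field F] [Ring A] [Algebra F A] [IsSimpleRing A]

/-- The Jacobson density theorem for `A` as a module over `A ⊗ Aᵐᵒᵖ`: its submodules are the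
two-sided ideals and its endomorphisms are the scalars, so every `F`-linear endomorphism of `A` is
a sum of maps `x ↦ a * x * b`. -/
theorem mulLeftRight_surjective [FiniteDimensional F A] (hc : Subalgebra.center F A = ⊥) :
    Function.Surjective (AlgHom.mulLeftRight F A) := by
  intro T
  let : Module (A ⊗[F] Aᵐᵒᵖ) A := Module.compHom A (AlgHom.mulLeftRight F A).toRingHom
  have hsm : ∀ (r : A ⊗[F] Aᵐᵒᵖ) (x : A), r • x = AlgHom.mulLeftRight F A r x := fun _ _ => rfl
  have hpure : ∀ (a b x : A), (a ⊗ₜ[F] MulOpposite.op b) • x = a * x * b := by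
    intro a b x; rw [hsm]; simp
  have : IsSimpleModule (A ⊗[F] Aᵐᵒᵖ) A := by
    rw [isSimpleModule_iff]
    refine { exists_pair_ne := ⟨⊥, ⊤, bot_ne_top⟩, eq_bot_or_eq_top := fun N => ?_ }
    let I : TwoSidedIdeal A := TwoSidedIdeal.mk' (N : Set A) N.zero_mem N.add_mem N.neg_mem
      (fun {x y} hy => by
        have := N.smul_mem (x ⊗ₜ[F] MulOpposite.op 1) hy
        rwa [hpure, mul_one] at this)
      (fun {x y} hx => by
        have := N.smul_mem ((1 : A) ⊗ₜ[F] MulOpposite.op y) hx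
        rwa [hpure, one_mul] at this)
    have hI : ∀ x, x ∈ I ↔ x ∈ N := fun x => TwoSidedIdeal.mem_mk' _ _ _ _ _ _ x
    rcases eq_bot_or_eq_top I with h | h
    · left
      rw [eq_bot_iff]
      intro x hx
      rw [← hI, h] at hx
      simpa using! hx
    · right
      rw [eq_top_iff]
      intro x _
      rw [← hI, h]
      trivial
  -- An endomorphism `g` is multiplication by `g 1`, which is central, hence a scalar; so the
  -- `F`-linear map `T` commutes with `g`.
  let f : Module.End (Module.End (A ⊗[F] Aᵐᵒᵖ) A) A :=
    { toFun := T
      map_add' := T.map_add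
      map_smul' := by
        intro g x
        have hg : ∀ y, g y = y * g 1 := by
          intro y
          have := g.map_smul (y ⊗ₜ[F] MulOpposite.op 1) 1
          simpa only [hpure, mul_one] using this
        have hg' : ∀ y, g y = g 1 * y := by
          intro y
          have := g.map_smul ((1 : A) ⊗ₜ[F] MulOpposite.op y) 1
          simpa only [hpure, one_mul] using this
        have hmem : g 1 ∈ Subalgebra.center F A := by
          rw [Subalgebra.mem_center_iff]
          intro y
          rw [← hg, ← hg']
        rw [hc, Algebra.mem_bot] at hmem
        obtain ⟨c, hc⟩ := hmem
        change T (g x) = g (T x)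
        rw [hg' x, hg' (T x), ← hc, ← Algebra.smul_def, ← Algebra.smul_def, map_smul] }
  classical
  let b := Module.finBasis F A
  obtain ⟨r, hr⟩ := jacobson_density f (Finset.univ.image b)
  refine ⟨r, b.ext fun i => ?_⟩
  rw [← hsm, ← hr (b i) (Finset.mem_image_of_mem _ (Finset.mem_univ i))]
  rfl

/-- A nonzero ideal of `K ⊗ A` is stable under `1 ⊗ T` for every `F`-linear `T : A → A`; taking
for `T` a coordinate function, viewed as a map into `F ⊆ A`, produces a nonzero element of `K` in
the ideal. -/
theorem isSimpleRing_tensor [FiniteDimensional F A] (hc : Subalgebra.center F A = ⊥)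
    (K : Type) [Field K] [Algebra F K] : IsSimpleRing (K ⊗[F] A) := by
  have : Nontrivial (TwoSidedIdeal (K ⊗[F] A)) := by
    refine ⟨⊥, ⊤, fun h => ?_⟩
    have h1 : (1 : K ⊗[F] A) ∈ (⊥ : TwoSidedIdeal (K ⊗[F] A)) := by rw [h]; trivial
    exact one_ne_zero (α := K ⊗[F] A) h1
  refine ⟨{ eq_bot_or_eq_top := fun I => ?_ }⟩
  by_cases hI : ∃ z ∈ I, z ≠ 0
  swap
  · left
    push Not at hI
    rw [eq_bot_iff]
    intro z hz
    rw [hI z hz]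
    exact TwoSidedIdeal.zero_mem _
  right
  obtain ⟨z, hz, hz0⟩ := hI
  have stable : ∀ T : Module.End F A, T.lTensor K z ∈ I := by
    intro T
    obtain ⟨r, rfl⟩ := mulLeftRight_surjective hc T
    induction r with
    | zero => simp
    | add x y hx hy =>
      rw [map_add, LinearMap.lTensor_add]
      exact I.add_mem hx hy
    | tmul a b =>
      have : (AlgHom.mulLeftRight F A (a ⊗ₜ b)).lTensor K z =
          ((1 : K) ⊗ₜ[F] a) * z * ((1 : K) ⊗ₜ[F] b.unop) := by
        clear hz hz0
        induction z with
        | zero => simp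
        | add x y hx hy => rw [map_add, hx, hy, mul_add, add_mul]
        | tmul k x => simp
      rw [this]
      exact I.mul_mem_right _ _ (I.mul_mem_left _ _ hz)
  let b := Module.finBasis F A
  let B := Algebra.TensorProduct.basis K b
  obtain ⟨i, hi⟩ : ∃ i, B.repr z i ≠ 0 := by
    by_contra! h
    exact hz0 (B.repr.map_eq_zero_iff.mp (Finsupp.ext h))
  have key : ((b.coord i).smulRight (1 : A)).lTensor K z = (B.repr z i) ⊗ₜ[F] (1 : A) := by
    clear hi hz hz0 stable
    induction z with
    | zero => simp
    | add x y hx hy => rw [map_add, hx, hy, map_add, Finsupp.add_apply, TensorProduct.add_tmul]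
    | tmul k x =>
      simp [B, Algebra.TensorProduct.basis_repr_tmul, TensorProduct.tmul_smul,
        TensorProduct.smul_tmul']
      rw [Algebra.smul_def, mul_comm]
  have hmem := stable ((b.coord i).smulRight (1 : A))
  rw [key] at hmem
  have h1 : (1 : K ⊗[F] A) ∈ I := by
    have := I.mul_mem_left ((B.repr z i)⁻¹ ⊗ₜ[F] (1 : A)) _ hmem
    rwa [Algebra.TensorProduct.tmul_mul_tmul, inv_mul_cancel₀ hi, one_mul,
      ← Algebra.TensorProduct.one_def] at this
  rw [eq_top_iff]
  intro x _
  simpa using I.mul_mem_left x 1 h1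

end Simple

/-! ### Modules over `K ⊗ A` -/

section Modules

variable {F A K M N : Type} [Field F] [Ring A] [Algebra F A] [IsSimpleRing A]
  [FiniteDimensional F A] [Field K] [Algebra F K]
  [AddCommGroup M] [Module F M] [Module A M] [Module K M] [IsScalarTower F A M]
  [IsScalarTower F K M] [SMulCommClass K A M]
  [AddCommGroup N] [Module F N] [Module A N] [Module K N] [IsScalarTower F A N]
  [IsScalarTower F K N] [SMulCommClass K A N]

attribute [local instance] TensorProduct.Algebra.module

theorem isScalarTower_tensor : IsScalarTower K (K ⊗[F] A) M where
  smul_assoc k r m := by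
    induction r with
    | zero => simp
    | add x y hx hy => rw [smul_add, add_smul, hx, hy, add_smul, smul_add]
    | tmul a b =>
      rw [TensorProduct.smul_tmul', TensorProduct.Algebra.smul_def,
        TensorProduct.Algebra.smul_def, smul_assoc]

/-- A nonzero module over the simple ring `K ⊗ A` is faithful, whence
`dim_F A = dim_K (K ⊗ A) ≤ dim_K (End_K M)`. -/
theorem le_finrank_of_nontrivial (hc : Subalgebra.center F A = ⊥) [Nontrivial M]
    [FiniteDimensional K M] {n : ℕ} (hd : Module.finrank F A = n ^ 2) :
    n ≤ Module.finrank K M := by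
  have := isSimpleRing_tensor hc K
  have : IsScalarTower K (K ⊗[F] A) M := isScalarTower_tensor
  let f : (K ⊗[F] A) →ₐ[K] Module.End K M := Algebra.lsmul K K M
  have hf : Function.Injective f := RingHom.injective f.toRingHom
  have := LinearMap.finrank_le_finrank_of_injective (f := f.toLinearMap) hf
  rw [Module.finrank_baseChange, hd, Module.finrank_linearMap, ← sq] at this
  exact (Nat.pow_le_pow_iff_left two_ne_zero).mp this

/-- Over the simple Artinian ring `K ⊗ A` every finite module is a power of the unique simple
module, so its `K`-dimension determines it up to isomorphism. -/
theorem exists_equiv_of_finrank_eq (hc : Subalgebra.center F A = ⊥)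
    [FiniteDimensional K M] [FiniteDimensional K N]
    (h : Module.finrank K M = Module.finrank K N) :
    ∃ θ : M ≃ₗ[A] N, ∀ (k : K) (m : M), θ (k • m) = k • θ m := by
  have := isSimpleRing_tensor hc K
  have : IsScalarTower K (K ⊗[F] A) M := isScalarTower_tensor
  have : IsScalarTower K (K ⊗[F] A) N := isScalarTower_tensor
  have : IsArtinianRing (K ⊗[F] A) := IsArtinianRing.of_finite K _
  have : Module.Finite (K ⊗[F] A) M := Module.Finite.of_restrictScalars_finite K _ _
  have : Module.Finite (K ⊗[F] A) N := Module.Finite.of_restrictScalars_finite K _ _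
  obtain ⟨S, hS⟩ := IsAtomic.exists_atom (Ideal (K ⊗[F] A))
  have : IsSimpleModule (K ⊗[F] A) S := isSimpleModule_iff_isAtom.mpr hS
  have iso : ∀ (P : Type) [AddCommGroup P] [Module (K ⊗[F] A) P],
      IsIsotypicOfType (K ⊗[F] A) P S := by
    intro P _ _ m _
    obtain ⟨J, ⟨e⟩⟩ := IsSemisimpleRing.exists_linearEquiv_ideal_of_isSimpleModule (K ⊗[F] A) m
    have := IsSimpleModule.congr e.symm
    obtain ⟨e'⟩ := IsSimpleRing.isIsotypic (K ⊗[F] A) (K ⊗[F] A) S J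
    exact ⟨e.trans e'⟩
  obtain ⟨a, ⟨eM⟩⟩ := (iso M).linearEquiv_fun
  obtain ⟨b, ⟨eN⟩⟩ := (iso N).linearEquiv_fun
  have : FiniteDimensional K S :=
    FiniteDimensional.of_injective (S.subtype.restrictScalars K) S.subtype_injective
  have hSpos : 0 < Module.finrank K S := by
    have := IsSimpleModule.nontrivial (K ⊗[F] A) S
    exact Module.finrank_pos
  have hM := (eM.restrictScalars K).finrank_eq
  have hN := (eN.restrictScalars K).finrank_eq
  rw [Module.finrank_pi_fintype] at hM hN
  simp only [Finset.sum_const, Finset.card_univ, Fintype.card_fin, smul_eq_mul] at hM hN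
  have hab : a = b := by
    rw [hM, hN] at h
    exact Nat.eq_of_mul_eq_mul_right hSpos h
  subst hab
  let e := eM.trans eN.symm
  have hA : ∀ (P : Type) [AddCommGroup P] [Module F P] [Module A P] [Module K P]
      [IsScalarTower F A P] [IsScalarTower F K P] [SMulCommClass K A P] (a : A) (p : P),
      ((1 : K) ⊗ₜ[F] a) • p = a • p := by
    intro P _ _ _ _ _ _ _ a p
    rw [TensorProduct.Algebra.smul_def, one_smul]
  have hK : ∀ (P : Type) [AddCommGroup P] [Module F P] [Module A P] [Module K P]
      [IsScalarTower F A P] [IsScalarTower F K P] [SMulCommClass K A P] (k : K) (p : P),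
      (k ⊗ₜ[F] (1 : A)) • p = k • p := by
    intro P _ _ _ _ _ _ _ k p
    rw [TensorProduct.Algebra.smul_def, one_smul]
  refine ⟨{ e.toAddEquiv with map_smul' := fun a m => ?_ }, fun k m => ?_⟩
  · have := e.map_smul ((1 : K) ⊗ₜ[F] a) m
    rw [hA, hA] at this
    exact this
  · have := e.map_smul (k ⊗ₜ[F] (1 : A)) m
    rw [hK, hK] at this
    exact this

end Modules

/-! ### Embeddings of a product of fields -/

section Pieces

variable {F A : Type} [Field F] [Ring A] [Algebra F A]
  {ι : Type} [Fintype ι] [DecidableEq ι] {K : ι → Type} [∀ i, Field (K i)] [∀ i, Algebra F (K i)]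

/-- The left ideal `A * h eᵢ` of `A`, where `eᵢ` is the `i`-th primitive idempotent of `∏ K i`,
described as the set of elements fixed by right multiplication by `h eᵢ`. -/
def piece (h : (∀ i, K i) →ₐ[F] A) (i : ι) : Submodule A A where
  carrier := {a | a * h (Pi.single i 1) = a}
  add_mem' := by
    intro a b (ha : _ = _) (hb : _ = _)
    change _ = _
    rw [add_mul, ha, hb]
  zero_mem' := zero_mul _
  smul_mem' := by
    intro c a (ha : _ = _)
    change _ = _
    rw [smul_eq_mul, mul_assoc, ha]

variable (h : (∀ i, K i) →ₐ[F] A)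

theorem mem_piece {i : ι} {a : A} : a ∈ piece h i ↔ a * h (Pi.single i 1) = a := Iff.rfl

theorem mul_single_mem (a : A) (i : ι) (k : K i) : a * h (Pi.single i k) ∈ piece h i := by
  rw [mem_piece, mul_assoc, ← map_mul, ← Pi.single_mul, mul_one]

/-- `K i` acts on `A * h eᵢ` by right multiplication through `h`. -/
instance pieceModule (i : ι) : Module (K i) (piece h i) where
  smul k a := ⟨(a : A) * h (Pi.single i k), mul_single_mem h _ i k⟩
  one_smul a := Subtype.ext a.2
  mul_smul k l a := Subtype.ext <| by
    change (a : A) * _ = (a : A) * _ * _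
    rw [mul_assoc, ← map_mul, ← Pi.single_mul, mul_comm k l]
  smul_zero k := Subtype.ext (zero_mul _)
  smul_add k a b := Subtype.ext (add_mul _ _ _)
  add_smul k l a := Subtype.ext <| by
    change (a : A) * _ = (a : A) * _ + (a : A) * _
    rw [Pi.single_add, map_add, mul_add]
  zero_smul a := Subtype.ext <| by
    change (a : A) * _ = 0
    rw [Pi.single_zero, map_zero, mul_zero]

theorem coe_smul_piece {i : ι} (k : K i) (a : piece h i) :
    ((k • a : piece h i) : A) = (a : A) * h (Pi.single i k) := rfl

instance (i : ι) : IsScalarTower F (K i) (piece h i) where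
  smul_assoc c k a := Subtype.ext <| by
    rw [coe_smul_piece, Submodule.coe_smul_of_tower, coe_smul_piece, Pi.single_smul, map_smul,
      mul_smul_comm]

instance (i : ι) : SMulCommClass (K i) A (piece h i) where
  smul_comm k x a := Subtype.ext <| by
    simp only [coe_smul_piece, Submodule.coe_smul, smul_eq_mul, mul_assoc]

/-- The Peirce decomposition of `A` along the orthogonal idempotents `h eᵢ`. -/
def splitEquiv : A ≃ₗ[A] (∀ i, piece h i) where
  toFun a i := ⟨a * h (Pi.single i 1), mul_single_mem h a i 1⟩
  map_add' a b := funext fun i => Subtype.ext (add_mul _ _ _)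
  map_smul' c a := funext fun i => Subtype.ext (mul_assoc _ _ _)
  invFun v := ∑ i, (v i : A)
  left_inv a := by
    change ∑ i, a * h (Pi.single i 1) = a
    rw [← Finset.mul_sum, ← map_sum]
    have : ∑ i, Pi.single i (1 : K i) = (1 : ∀ i, K i) := Finset.univ_sum_single (1 : ∀ i, K i)
    rw [this, map_one, mul_one]
  right_inv v := funext fun i => Subtype.ext <| by
    change (∑ j, (v j : A)) * h (Pi.single i 1) = v i
    rw [Finset.sum_mul, Finset.sum_eq_single i]
    · exact (v i).2
    · intro j _ hj
      have hv : (v j : A) * h (Pi.single j 1) = v j := (v j).2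
      rw [← hv, mul_assoc, ← map_mul]
      have : (Pi.single j 1 * Pi.single i 1 : ∀ i, K i) = 0 := by
        ext l
        by_cases hl : l = j
        · subst hl; simp [hj]
        · simp [hl]
      rw [this, map_zero, mul_zero]
    · intro hi
      exact absurd (Finset.mem_univ i) hi

theorem splitEquiv_mul (a : A) (x : ∀ i, K i) (i : ι) :
    splitEquiv h (a * h x) i = x i • splitEquiv h a i := Subtype.ext <| by
  change a * h x * h (Pi.single i 1) = a * h (Pi.single i 1) * h (Pi.single i (x i))
  rw [mul_assoc, mul_assoc, ← map_mul, ← map_mul, ← Pi.single_mul, one_mul]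
  congr 2
  ext l
  by_cases hl : l = i
  · subst hl; simp
  · simp [hl]

variable [IsSimpleRing A] [FiniteDimensional F A] [∀ i, FiniteDimensional F (K i)]

instance (i : ι) : FiniteDimensional (K i) (piece h i) :=
  have : FiniteDimensional F (piece h i) :=
    FiniteDimensional.of_injective ((piece h i).subtype.restrictScalars F)
      (piece h i).subtype_injective
  Module.Finite.of_restrictScalars_finite F _ _

/-- The lower bounds `n ≤ dim_{K i} (A eᵢ)` add up to an equality over `F`, so each of them is an
equality. -/
theorem finrank_piece (hc : Subalgebra.center F A = ⊥) {n : ℕ}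
    (hd : Module.finrank F A = n ^ 2) (hK : Module.finrank F (∀ i, K i) = n)
    (hinj : Function.Injective h) (i : ι) : Module.finrank (K i) (piece h i) = n := by
  have hfin : ∀ i, FiniteDimensional F (piece h i) := fun i =>
    FiniteDimensional.of_injective ((piece h i).subtype.restrictScalars F)
      (piece h i).subtype_injective
  have hle : ∀ i, n ≤ Module.finrank (K i) (piece h i) := by
    intro i
    have : Nontrivial (piece h i) := by
      refine ⟨⟨⟨1 * h (Pi.single i 1), mul_single_mem h 1 i 1⟩, 0, fun h0 => ?_⟩⟩
      have h1 : 1 * h (Pi.single i 1) = 0 := congrArg Subtype.val h0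
      rw [one_mul, map_eq_zero_iff h hinj] at h1
      simpa using congrFun h1 i
    exact le_finrank_of_nontrivial (F := F) (A := A) hc hd
  have hmul : ∀ i, Module.finrank F (K i) * Module.finrank (K i) (piece h i) =
      Module.finrank F (piece h i) := fun i => Module.finrank_mul_finrank F (K i) (piece h i)
  have hsum := ((splitEquiv h).restrictScalars F).finrank_eq
  rw [Module.finrank_pi_fintype, hd] at hsum
  rw [Module.finrank_pi_fintype] at hK
  have hle' : ∀ i ∈ Finset.univ, Module.finrank F (K i) * n ≤ Module.finrank F (piece h i) :=
    fun i _ => (hmul i) ▸ Nat.mul_le_mul_left _ (hle i)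
  have heq : ∑ i, Module.finrank F (K i) * n = ∑ i, Module.finrank F (piece h i) := by
    rw [← Finset.sum_mul, hK, ← hsum, sq]
  have hi := (Finset.sum_eq_sum_iff_of_le hle').mp heq i (Finset.mem_univ i)
  rw [← hmul i] at hi
  exact (Nat.eq_of_mul_eq_mul_left Module.finrank_pos hi).symm

/-- Two embeddings into `A` of a product of fields of total dimension `n` are conjugate. -/
theorem exists_conj (hc : Subalgebra.center F A = ⊥) {n : ℕ}
    (hd : Module.finrank F A = n ^ 2) (hK : Module.finrank F (∀ i, K i) = n)
    (h' : (∀ i, K i) →ₐ[F] A)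
    (hinj : Function.Injective h) (hinj' : Function.Injective h') :
    ∃ u : Aˣ, ∀ x, h x * u = u * h' x := by
  have hex : ∀ i, ∃ θ : piece h i ≃ₗ[A] piece h' i, ∀ (k : K i) m, θ (k • m) = k • θ m := by
    intro i
    refine exists_equiv_of_finrank_eq (F := F) hc ?_
    rw [finrank_piece h hc hd hK hinj, finrank_piece h' hc hd hK hinj']
  choose θ hθ using hex
  let Θ : A ≃ₗ[A] A :=
    (splitEquiv h).trans ((LinearEquiv.piCongrRight θ).trans (splitEquiv h').symm)
  have hΘ : ∀ a x, Θ (a * h x) = Θ a * h' x := by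
    intro a x
    apply (splitEquiv h').injective
    ext1 i
    rw [splitEquiv_mul]
    simp only [Θ, LinearEquiv.trans_apply, LinearEquiv.apply_symm_apply,
      LinearEquiv.piCongrRight_apply, splitEquiv_mul, hθ]
  have hmul : ∀ a, Θ a = a * Θ 1 := by
    intro a
    have := Θ.map_smul a 1
    simpa only [smul_eq_mul, mul_one] using this
  have hv : Θ.symm 1 * Θ 1 = 1 := by rw [← hmul, Θ.apply_symm_apply]
  have hv' : Θ 1 * Θ.symm 1 = 1 := by
    apply Θ.injective
    rw [hmul, mul_assoc, hv, mul_one]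
  refine ⟨⟨Θ 1, Θ.symm 1, hv', hv⟩, fun x => ?_⟩
  change h x * Θ 1 = Θ 1 * h' x
  rw [← hmul, ← hΘ, one_mul]

end Pieces

/-! ### Étale subalgebras -/

/-- Minimal polynomials of separable elements are squarefree, so there are no nonzero nilpotents. -/
theorem isReduced_of_isSeparable (F E : Type) [Field F] [CommRing E] [Algebra F E]
    [Algebra.IsSeparable F E] : IsReduced E where
  eq_zero x := by
    rintro ⟨m, hm⟩
    have hsep : (minpoly F x).Separable := Algebra.IsSeparable.isSeparable F x
    have hdvd : minpoly F x ∣ Polynomial.X ^ m := minpoly.dvd F x (by simp [hm])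
    obtain ⟨q, hq⟩ := hsep.squarefree.isRadical _ _ hdvd
    have := congrArg (Polynomial.aeval x) hq
    simpa using this

end EtaleExtension

open EtaleExtension in

/-- Let `A` and `A'` be isomorphic central simple `F`-algebras of degree `n`, and let
`E ⊆ A`, `E' ⊆ A'` be commutative separable (étale) `F`-subalgebras of dimension `n`. Then
every `F`-algebra isomorphism `φ : E → E'` extends to an `F`-algebra isomorphism `A → A'`. -/
theorem exists_algEquiv_extending_on_etale_subalgebra
    (F : Type) [Field F] (n : ℕ) (hn : 1 ≤ n)
    (A A' : Type) [Ring A] [Ring A'] [Algebra F A] [Algebra F A']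
    [IsSimpleRing A] [IsSimpleRing A']
    (hcA : Subalgebra.center F A = ⊥) (hcA' : Subalgebra.center F A' = ⊥)
    [FiniteDimensional F A] [FiniteDimensional F A']
    (hdA : Module.finrank F A = n ^ 2) (hdA' : Module.finrank F A' = n ^ 2)
    (hiso : Nonempty (A ≃ₐ[F] A'))
    (E : Subalgebra F A) (E' : Subalgebra F A')
    (hcommE : ∀ x y : E, x * y = y * x) (hcommE' : ∀ x y : E', x * y = y * x)
    [Algebra.IsSeparable F E] [Algebra.IsSeparable F E']
    (hdE : Module.finrank F E = n) (hdE' : Module.finrank F E' = n)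
    (φ : E ≃ₐ[F] E') :
    ∃ ψ : A ≃ₐ[F] A', ∀ x : E, ψ (x : A) = (φ x : A') := by
  classical
  obtain ⟨α⟩ := hiso
  let : CommRing E := { (inferInstance : Ring E) with mul_comm := hcommE }
  have : IsReduced E := isReduced_of_isSeparable F E
  have : IsArtinianRing E := IsArtinianRing.of_finite F E
  let : ∀ I : MaximalSpectrum E, Field (E ⧸ I.asIdeal) := fun I => Ideal.Quotient.field _
  have : Fintype (MaximalSpectrum E) := Fintype.ofFinite _
  let e : E ≃ₐ[F] (∀ I : MaximalSpectrum E, E ⧸ I.asIdeal) :=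
    (IsArtinianRing.equivPi E).restrictScalars F
  let j : E →ₐ[F] A := (α.symm.toAlgHom.comp E'.val).comp φ.toAlgHom
  have hj : Function.Injective j :=
    (α.symm.injective.comp Subtype.val_injective).comp φ.injective
  obtain ⟨u, hu⟩ := exists_conj (E.val.comp e.symm.toAlgHom) hcA hdA
    (e.toLinearEquiv.finrank_eq.symm.trans hdE) (j.comp e.symm.toAlgHom)
    (Subtype.val_injective.comp e.symm.injective) (hj.comp e.symm.injective)
  have hu' : ∀ x : E, (x : A) * u = u * α.symm (φ x : A') := by
    intro x
    simpa [j] using hu (e x)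
  let c : A ≃ₐ[F] A := AlgEquiv.ofAlgHom
    { toFun := fun a => ↑u⁻¹ * a * u
      map_one' := by simp
      map_mul' := fun a b => by simp [mul_assoc]
      map_zero' := by simp
      map_add' := fun a b => by rw [mul_add, add_mul]
      commutes' := fun r => by rw [← Algebra.commutes, mul_assoc, u.inv_mul, mul_one] }
    { toFun := fun a => ↑u * a * ↑u⁻¹
      map_one' := by simp
      map_mul' := fun a b => by simp [mul_assoc]
      map_zero' := by simp
      map_add' := fun a b => by rw [mul_add, add_mul]
      commutes' := fun r => by rw [← Algebra.commutes, mul_assoc, u.mul_inv, mul_one] }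
    (by ext a; simp [mul_assoc]) (by ext a; simp [mul_assoc])
  refine ⟨c.trans α, fun x => ?_⟩
  change α (↑u⁻¹ * (x : A) * u) = _
  rw [mul_assoc, hu', Units.inv_mul_cancel_left, AlgEquiv.apply_symm_apply]
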